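/- arXiv:2410.11383 — 3 statements merged into one kernel-verified Lean document; each statement's English description precedes it below -/
import Mathlib

section
/- For every sequence q on the network N, every δ > 0 and every x ∈ B_δ(q), there exists s₀ ≥ 0 such that φ s x ∈ B_δ(q) for all s ≥ s₀; in other words, the asymptotic δ-basin B_δ(q) eventually absorbs the forward trajectory of each of its points. (This makes precise the paper's assertion in Section 3.1 that the asymptotic basin is forward invariant.) -/
open MeasureTheory Filter Topology Metric Set

noncomputable section

/-- The shift operator `Σ` on sequences: `(Σ q) k = q (k+1)`. -/
def shiftSeq {A : Type*} (q : ℕ → A) : ℕ → A := fun k => q (k + 1)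

/-- A sequence is preperiodic if there exist `K ≥ 1` and `K₀ ≥ 0` with
`q (k + K) = q k` for all `k > K₀`. -/
def PreperiodicSeq {A : Type*} (q : ℕ → A) : Prop :=
  ∃ K : ℕ, 1 ≤ K ∧ ∃ K₀ : ℕ, ∀ k > K₀, q (k + K) = q k

/-- Euclidean space `ℝ^d`. -/
abbrev Es (d : ℕ) := EuclideanSpace ℝ (Fin d)

/-- The heteroclinic network as a subset of phase space:
`N = (⋃ p, {ξ p}) ∪ (⋃ j, γ j)`. -/
def netSet {d P Q : ℕ} (ξ : Fin P → Es d) (γ : Fin Q → Set (Es d)) : Set (Es d) :=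
  (⋃ p, {ξ p}) ∪ ⋃ j, γ j

/-- `x` follows the sequence `q` within `UN`: there are times
`0 ≤ t 0 < t' 0 < t 1 < t' 1 < ⋯` such that the trajectory of `x` stays in `UN`
after time `t 0`, visits the neighborhoods `U (a (q k))` and `V (q k)` at times
`t k` and `t' k`, and between `t' k` and `t' (k+1)` avoids all neighborhoods
`U p` with `p ≠ b (q k)`. -/
def FollowsSeq {d P Q : ℕ} (φ : ℝ → Es d → Es d)
    (U : Fin P → Set (Es d)) (V : Fin Q → Set (Es d))
    (a b : Fin Q → Fin P) (UN : Set (Es d)) (q : ℕ → Fin Q) (x : Es d) : Prop :=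
  ∃ t t' : ℕ → ℝ,
    0 ≤ t 0 ∧ (∀ k, t k < t' k) ∧ (∀ k, t' k < t (k + 1)) ∧
    (∀ s, t 0 < s → φ s x ∈ UN) ∧
    (∀ k, φ (t k) x ∈ U (a (q k))) ∧
    (∀ k, φ (t' k) x ∈ V (q k)) ∧
    (∀ k, ∀ s, t' k < s → s < t' (k + 1) → ∀ p, p ≠ b (q k) → φ s x ∉ U p)

/-- The `δ`-stable set `S_δ(q)` of a sequence `q`. -/
def stableSet {d P Q : ℕ} (φ : ℝ → Es d → Es d) (ξ : Fin P → Es d) (γ : Fin Q → Set (Es d))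
    (U : Fin P → Set (Es d)) (V : Fin Q → Set (Es d)) (a b : Fin Q → Fin P)
    (δ : ℝ) (q : ℕ → Fin Q) : Set (Es d) :=
  {x ∈ thickening δ (netSet ξ γ) |
    FollowsSeq φ U V a b (thickening δ (netSet ξ γ)) q x}

/-- The set `A_δ(q)` of points attracted to `N` along `q`. -/
def attrSet {d P Q : ℕ} (φ : ℝ → Es d → Es d) (ξ : Fin P → Es d) (γ : Fin Q → Set (Es d))
    (U : Fin P → Set (Es d)) (V : Fin Q → Set (Es d)) (a b : Fin Q → Fin P)
    (δ : ℝ) (q : ℕ → Fin Q) : Set (Es d) :=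
  {x ∈ stableSet φ ξ γ U V a b δ q |
    Tendsto (fun t => infDist (φ t x) (netSet ξ γ)) atTop (𝓝 0)}

/-- The asymptotic `δ`-basin of attraction `B_δ(q) = ⋃ k, A_δ(Σ^k q)`. -/
def basin {d P Q : ℕ} (φ : ℝ → Es d → Es d) (ξ : Fin P → Es d) (γ : Fin Q → Set (Es d))
    (U : Fin P → Set (Es d)) (V : Fin Q → Set (Es d)) (a b : Fin Q → Fin P)
    (δ : ℝ) (q : ℕ → Fin Q) : Set (Es d) :=
  ⋃ k : ℕ, attrSet φ ξ γ U V a b δ (shiftSeq^[k] q)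

/-- The difference set `D_δ^(k)(q) = A_δ(Σ^k q) \ A_δ(Σ^(k-1) q)` (for `k ≥ 1`). -/
def Dset {d P Q : ℕ} (φ : ℝ → Es d → Es d) (ξ : Fin P → Es d) (γ : Fin Q → Set (Es d))
    (U : Fin P → Set (Es d)) (V : Fin Q → Set (Es d)) (a b : Fin Q → Fin P)
    (δ : ℝ) (q : ℕ → Fin Q) (k : ℕ) : Set (Es d) :=
  attrSet φ ξ γ U V a b δ (shiftSeq^[k] q) \
    attrSet φ ξ γ U V a b δ (shiftSeq^[k - 1] q)

/-- Fragmentary asymptotic stability of a sequence: `μ(B_δ(q)) > 0` for every `δ > 0`. -/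
def FAS {d P Q : ℕ} (φ : ℝ → Es d → Es d) (ξ : Fin P → Es d) (γ : Fin Q → Set (Es d))
    (U : Fin P → Set (Es d)) (V : Fin Q → Set (Es d)) (a b : Fin Q → Fin P)
    (q : ℕ → Fin Q) : Prop :=
  ∀ δ : ℝ, 0 < δ → 0 < volume (basin φ ξ γ U V a b δ q)

/-! The orbit of `x` alternates between the disjoint closed sets `⋃ p, closure (U p)` and
`⋃ j, closure (V j)`. If the visiting times were bounded, they would converge to a common `T`,
and `φ T x` would lie in both sets. Hence they tend to infinity. For `s` past the first visit, drop
the visits before time `s` and restart the clock there: `φ s x` follows a shift `Σ^m q`. -/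

theorem shiftSeq_iterate_apply {A : Type*} (q : ℕ → A) (m k : ℕ) :
    shiftSeq^[m] q k = q (k + m) := by
  induction m generalizing k with
  | zero => rfl
  | succ m ih => rw [Function.iterate_succ_apply', shiftSeq, ih, Nat.succ_add_eq_add_succ]

theorem tendsto_atTop_of_alternating_visits {R X : Type*} [ConditionallyCompleteLinearOrder R]
    [TopologicalSpace R] [OrderTopology R] [TopologicalSpace X] {f : R → X} (hf : Continuous f)
    {C D : Set X} (hC : IsClosed C) (hD : IsClosed D) (hCD : Disjoint C D) {t t' : ℕ → R}
    (htt' : ∀ k, t k ≤ t' k) (ht't : ∀ k, t' k ≤ t (k + 1))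
    (htC : ∀ k, f (t k) ∈ C) (htD : ∀ k, f (t' k) ∈ D) : Tendsto t atTop atTop := by
  have hmono : Monotone t := monotone_nat_of_le_succ fun k => (htt' k).trans (ht't k)
  refine (tendsto_atTop_of_monotone hmono).resolve_right ?_
  rintro ⟨T, hT⟩
  have hT' : Tendsto t' atTop (𝓝 T) :=
    tendsto_of_tendsto_of_tendsto_of_le_of_le hT ((tendsto_add_atTop_iff_nat 1).2 hT) htt' ht't
  exact hCD.notMem_of_mem_left
    (hC.mem_of_tendsto ((hf.tendsto T).comp hT) (.of_forall htC))
    (hD.mem_of_tendsto ((hf.tendsto T).comp hT') (.of_forall htD))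

/-- The times `t k`, `t' k` witness that `x` follows the sequence `q` within `W`. This is the body
of `FollowsSeq` (see `followsSeq_iff`), named so that the visiting times can be manipulated. -/
structure IsItinerary {X ι κ : Type*} (φ : ℝ → X → X) (U : ι → Set X) (V : κ → Set X)
    (a b : κ → ι) (W : Set X) (q : ℕ → κ) (x : X) (t t' : ℕ → ℝ) : Prop where
  nonneg : 0 ≤ t 0
  lt : ∀ k, t k < t' k
  lt_succ : ∀ k, t' k < t (k + 1)
  mem_of_lt : ∀ s, t 0 < s → φ s x ∈ W
  mem_source : ∀ k, φ (t k) x ∈ U (a (q k))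
  mem_connection : ∀ k, φ (t' k) x ∈ V (q k)
  avoids : ∀ k s, t' k < s → s < t' (k + 1) → ∀ p, p ≠ b (q k) → φ s x ∉ U p

namespace IsItinerary

variable {X ι κ : Type*} {U : ι → Set X} {V : κ → Set X} {a b : κ → ι} {W : Set X} {q : ℕ → κ}
  {x : X} {t t' : ℕ → ℝ}

theorem monotone {φ : ℝ → X → X} (h : IsItinerary φ U V a b W q x t t') : Monotone t :=
  monotone_nat_of_le_succ fun k => ((h.lt k).trans (h.lt_succ k)).le

theorem shift {φ : ℝ → X → X} (h : IsItinerary φ U V a b W q x t t') (m : ℕ) :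
    IsItinerary φ U V a b W (shiftSeq^[m] q) x (fun k => t (k + m)) (fun k => t' (k + m)) where
  nonneg := h.nonneg.trans (h.monotone (Nat.zero_le _))
  lt k := h.lt (k + m)
  lt_succ k := by simpa only [add_right_comm] using h.lt_succ (k + m)
  mem_of_lt s hs := h.mem_of_lt s ((h.monotone (Nat.zero_le _)).trans_lt hs)
  mem_source k := by simpa only [shiftSeq_iterate_apply] using h.mem_source (k + m)
  mem_connection k := by simpa only [shiftSeq_iterate_apply] using h.mem_connection (k + m)
  avoids k := by
    simpa only [shiftSeq_iterate_apply, add_right_comm k 1 m] using h.avoids (k + m)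

theorem flow [TopologicalSpace X] {φ : Flow ℝ X} (h : IsItinerary φ U V a b W q x t t') {s : ℝ}
    (hs : s ≤ t 0) :
    IsItinerary φ U V a b W q (φ s x) (fun k => t k - s) (fun k => t' k - s) where
  nonneg := sub_nonneg.2 hs
  lt k := sub_lt_sub_right (h.lt k) s
  lt_succ k := sub_lt_sub_right (h.lt_succ k) s
  mem_of_lt r hr := by
    rw [← φ.map_add]
    exact h.mem_of_lt _ (sub_lt_iff_lt_add.1 hr)
  mem_source k := by simpa only [← φ.map_add, sub_add_cancel] using h.mem_source k
  mem_connection k := by simpa only [← φ.map_add, sub_add_cancel] using h.mem_connection k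
  avoids k r hr hr' := by
    simpa only [← φ.map_add] using
      h.avoids k (r + s) (sub_lt_iff_lt_add.1 hr) (lt_sub_iff_add_lt.1 hr')

theorem tendsto_atTop [TopologicalSpace X] [Finite ι] [Finite κ] {φ : ℝ → X → X}
    (h : IsItinerary φ U V a b W q x t t') (hx : Continuous fun s => φ s x)
    (hUV : ∀ i j, Disjoint (closure (U i)) (closure (V j))) : Tendsto t atTop atTop := by
  have hdisj : Disjoint (⋃ i, closure (U i)) (⋃ j, closure (V j)) :=
    disjoint_iUnion_left.2 fun i => disjoint_iUnion_right.2 fun j => hUV i j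
  exact tendsto_atTop_of_alternating_visits hx
    (isClosed_iUnion_of_finite fun _ => isClosed_closure)
    (isClosed_iUnion_of_finite fun _ => isClosed_closure) hdisj
    (fun k => (h.lt k).le) (fun k => (h.lt_succ k).le)
    (fun k => mem_iUnion_of_mem _ (subset_closure (h.mem_source k)))
    (fun k => mem_iUnion_of_mem _ (subset_closure (h.mem_connection k)))

end IsItinerary

section

variable {d P Q : ℕ} {U : Fin P → Set (Es d)} {V : Fin Q → Set (Es d)} {a b : Fin Q → Fin P}
  {q : ℕ → Fin Q} {x : Es d}

theorem followsSeq_iff {φ : ℝ → Es d → Es d} {W : Set (Es d)} :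
    FollowsSeq φ U V a b W q x ↔ ∃ t t', IsItinerary φ U V a b W q x t t' :=
  ⟨fun ⟨t, t', h₀, h₁, h₂, h₃, h₄, h₅, h₆⟩ => ⟨t, t', h₀, h₁, h₂, h₃, h₄, h₅, h₆⟩,
    fun ⟨t, t', h₀, h₁, h₂, h₃, h₄, h₅, h₆⟩ => ⟨t, t', h₀, h₁, h₂, h₃, h₄, h₅, h₆⟩⟩

theorem FollowsSeq.eventually_mem_and_exists_shift {φ : Flow ℝ (Es d)} {W : Set (Es d)}
    (h : FollowsSeq φ U V a b W q x) (hUV : ∀ p j, Disjoint (closure (U p)) (closure (V j))) :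
    ∀ᶠ s in atTop, φ s x ∈ W ∧ ∃ m, FollowsSeq φ U V a b W (shiftSeq^[m] q) (φ s x) := by
  obtain ⟨t, t', h⟩ := followsSeq_iff.1 h
  have ht : Tendsto t atTop atTop :=
    h.tendsto_atTop (φ.continuous continuous_id continuous_const) hUV
  filter_upwards [eventually_gt_atTop (t 0)] with s hs
  obtain ⟨m, hm⟩ := (ht.eventually_ge_atTop s).exists
  refine ⟨h.mem_of_lt s hs, m, followsSeq_iff.2 ⟨_, _, (h.shift m).flow ?_⟩⟩
  rwa [zero_add]

variable {ξ : Fin P → Es d} {γ : Fin Q → Set (Es d)} {δ : ℝ}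

theorem basin_shiftSeq_iterate_subset (φ : ℝ → Es d → Es d) (n : ℕ) :
    basin φ ξ γ U V a b δ (shiftSeq^[n] q) ⊆ basin φ ξ γ U V a b δ q :=
  iUnion_subset fun k => by
    rw [← Function.iterate_add_apply]
    exact subset_iUnion (fun k => attrSet φ ξ γ U V a b δ (shiftSeq^[k] q)) (k + n)

theorem eventually_mem_basin_of_mem_attrSet {φ : Flow ℝ (Es d)}
    (hUV : ∀ p j, Disjoint (closure (U p)) (closure (V j)))
    (hx : x ∈ attrSet φ ξ γ U V a b δ q) :
    ∀ᶠ s in atTop, φ s x ∈ basin φ ξ γ U V a b δ q := by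
  obtain ⟨⟨-, hfollows⟩, hlim⟩ := hx
  filter_upwards [hfollows.eventually_mem_and_exists_shift hUV] with s ⟨hmem, m, hm⟩
  have hlim' : Tendsto (fun r => infDist (φ r (φ s x)) (netSet ξ γ)) atTop (𝓝 0) := by
    simpa only [Function.comp_def, φ.map_add, id_eq] using
      hlim.comp (tendsto_atTop_add_const_right _ s tendsto_id)
  exact mem_iUnion.2 ⟨m, ⟨hmem, hm⟩, hlim'⟩

theorem basin_eventually_forward_invariant_general {φ : Flow ℝ (Es d)}
    (hUV : ∀ p j, Disjoint (closure (U p)) (closure (V j)))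
    (hx : x ∈ basin φ ξ γ U V a b δ q) :
    ∃ s₀ : ℝ, 0 ≤ s₀ ∧ ∀ s : ℝ, s₀ ≤ s → φ s x ∈ basin φ ξ γ U V a b δ q := by
  obtain ⟨n, hn⟩ := mem_iUnion.1 hx
  have habsorb : ∀ᶠ s in atTop, φ s x ∈ basin φ ξ γ U V a b δ q :=
    (eventually_mem_basin_of_mem_attrSet hUV hn).mono fun _ hs =>
      basin_shiftSeq_iterate_subset φ n hs
  exact ((eventually_ge_atTop 0).and (eventually_forall_ge_atTop.2 habsorb)).exists

end

/-- The asymptotic `δ`-basin eventually absorbs the forward trajectory of each of its points. -/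
theorem basin_eventually_forward_invariant
    {d P Q : ℕ} (hd : 1 ≤ d) (hP : 1 ≤ P) (hQ : 1 ≤ Q)
    (φ : ℝ → Es d → Es d)
    (hφcont : Continuous fun pr : ℝ × Es d => φ pr.1 pr.2)
    (hφ0 : ∀ x, φ 0 x = x)
    (hφadd : ∀ s t x, φ (s + t) x = φ s (φ t x))
    (ξ : Fin P → Es d) (hξinj : Function.Injective ξ)
    (hfix : ∀ t p, φ t (ξ p) = ξ p)
    (γ : Fin Q → Set (Es d)) (hγne : ∀ j, (γ j).Nonempty)
    (hγinv : ∀ j t x, x ∈ γ j → φ t x ∈ γ j)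
    (a b : Fin Q → Fin P)
    (hω : ∀ j, ∀ x ∈ γ j, Tendsto (fun t => φ t x) atTop (𝓝 (ξ (b j))))
    (hα : ∀ j, ∀ x ∈ γ j, Tendsto (fun t => φ t x) atBot (𝓝 (ξ (a j))))
    (ζ : Fin Q → Es d) (hζ : ∀ j, ζ j ∈ γ j)
    (U : Fin P → Set (Es d)) (hUopen : ∀ p, IsOpen (U p)) (hUmem : ∀ p, ξ p ∈ U p)
    (V : Fin Q → Set (Es d)) (hVopen : ∀ j, IsOpen (V j)) (hVmem : ∀ j, ζ j ∈ V j)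
    (hUU : ∀ p p', p ≠ p' → Disjoint (closure (U p)) (closure (U p')))
    (hVV : ∀ j j', j ≠ j' → Disjoint (closure (V j)) (closure (V j')))
    (hUV : ∀ p j, Disjoint (closure (U p)) (closure (V j)))
    (q : ℕ → Fin Q) (hq : ∀ k, b (q k) = a (q (k + 1))) :
    ∀ δ : ℝ, 0 < δ → ∀ x ∈ basin φ ξ γ U V a b δ q,
      ∃ s₀ : ℝ, 0 ≤ s₀ ∧ ∀ s : ℝ, s₀ ≤ s → φ s x ∈ basin φ ξ γ U V a b δ q := by
  let Φ : Flow ℝ (Es d) := ⟨φ, hφcont, hφadd, hφ0⟩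
  exact fun _ _ _ hx => basin_eventually_forward_invariant_general (φ := Φ) hUV hx
end
end

section
/- Let q be a sequence on the network N such that Σ^m q = Σ^(m+n) q for some m ∈ ℕ and n ≥ 1. Then for every δ > 0 and every k > m, the difference set D_δ^(k)(q) is empty. (This is the key step in the proof of Proposition 3.2 of the paper.) -/
open MeasureTheory Filter Topology Metric Set

noncomputable section

/-!
Dropping the first excursion of a trajectory that follows `q` leaves one that follows `Σ q`, so
`A_δ(q) ⊆ A_δ(Σ q)`. Once an iterate of `q` lies on a cycle of `Σ`, these inclusions close up into a
circular chain, so from there on all the sets `A_δ(Σ^k q)` coincide.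
-/

section PeriodicPoints

open Function

theorem apply_map_eq_of_mem_periodicPts {α β : Type*} [PartialOrder β] {f : α → α} {F : α → β}
    (hF : ∀ y, F y ≤ F (f y)) {x : α} (hx : x ∈ periodicPts f) : F (f x) = F x := by
  obtain ⟨n, hn, hperiod⟩ := hx
  have hmono : Monotone fun k => F (f^[k] x) := monotone_nat_of_le_succ fun k => by
    rw [iterate_succ_apply']
    exact hF _
  refine le_antisymm ?_ (hF x)
  calc F (f x) ≤ F (f^[n] x) := hmono (Nat.one_le_of_lt hn)
    _ = F x := by rw [hperiod.eq]

theorem iterate_mem_periodicPts_of_iterate_eq {α : Type*} {f : α → α} {x : α} {m n k : ℕ}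
    (hn : 1 ≤ n) (hper : f^[m] x = f^[m + n] x) (hk : m ≤ k) : f^[k] x ∈ periodicPts f := by
  have hm : IsPeriodicPt f n (f^[m] x) := by
    rw [IsPeriodicPt, IsFixedPt, ← iterate_add_apply, add_comm n m, hper]
  rw [← Nat.sub_add_cancel hk, iterate_add_apply]
  exact mk_mem_periodicPts hn (hm.apply_iterate (k - m))

end PeriodicPoints

section AttractedSets

variable {d P Q : ℕ} {φ : ℝ → Es d → Es d} {ξ : Fin P → Es d} {γ : Fin Q → Set (Es d)}
  {U : Fin P → Set (Es d)} {V : Fin Q → Set (Es d)} {a b : Fin Q → Fin P}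

protected theorem FollowsSeq.shiftSeq {UN : Set (Es d)} {q : ℕ → Fin Q} {x : Es d}
    (h : FollowsSeq φ U V a b UN q x) : FollowsSeq φ U V a b UN (shiftSeq q) x := by
  obtain ⟨t, t', ht₀, htt', ht't, hUN, hU, hV, havoid⟩ := h
  have ht₀₁ : t 0 < t 1 := (htt' 0).trans (ht't 0)
  exact ⟨fun k => t (k + 1), fun k => t' (k + 1), ht₀.trans ht₀₁.le, fun k => htt' (k + 1),
    fun k => ht't (k + 1), fun s hs => hUN s (ht₀₁.trans hs), fun k => hU (k + 1),
    fun k => hV (k + 1), fun k => havoid (k + 1)⟩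

theorem stableSet_subset_stableSet_shiftSeq (δ : ℝ) (q : ℕ → Fin Q) :
    stableSet φ ξ γ U V a b δ q ⊆ stableSet φ ξ γ U V a b δ (shiftSeq q) :=
  fun _ hx => ⟨hx.1, hx.2.shiftSeq⟩

theorem attrSet_subset_attrSet_shiftSeq (δ : ℝ) (q : ℕ → Fin Q) :
    attrSet φ ξ γ U V a b δ q ⊆ attrSet φ ξ γ U V a b δ (shiftSeq q) :=
  fun _ hx => ⟨stableSet_subset_stableSet_shiftSeq δ q hx.1, hx.2⟩

theorem attrSet_shiftSeq_of_mem_periodicPts (δ : ℝ) {q : ℕ → Fin Q}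
    (hq : q ∈ Function.periodicPts shiftSeq) :
    attrSet φ ξ γ U V a b δ (shiftSeq q) = attrSet φ ξ γ U V a b δ q :=
  apply_map_eq_of_mem_periodicPts (attrSet_subset_attrSet_shiftSeq δ) hq

theorem Dset_empty_of_shift_eq_general {q : ℕ → Fin Q} {m n : ℕ} (hn : 1 ≤ n)
    (hper : shiftSeq^[m] q = shiftSeq^[m + n] q) (δ : ℝ) {k : ℕ} (hk : m < k) :
    Dset φ ξ γ U V a b δ q k = ∅ := by
  obtain ⟨j, rfl⟩ := Nat.exists_eq_add_one_of_ne_zero (Nat.ne_zero_of_lt hk)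
  have hcycle : shiftSeq^[j] q ∈ Function.periodicPts shiftSeq :=
    iterate_mem_periodicPts_of_iterate_eq hn hper (Nat.le_of_lt_succ hk)
  rw [Dset, Nat.add_sub_cancel, Function.iterate_succ_apply',
    attrSet_shiftSeq_of_mem_periodicPts δ hcycle, Set.sdiff_self]

end AttractedSets

/-- Key step of Proposition 3.2: if `Σ^m q = Σ^(m+n) q` with `n ≥ 1`, then `D_δ^(k)(q) = ∅` for all `δ > 0` and all `k > m`. -/
theorem Dset_empty_of_shift_eq
    {d P Q : ℕ} (hd : 1 ≤ d) (hP : 1 ≤ P) (hQ : 1 ≤ Q)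
    (φ : ℝ → Es d → Es d)
    (hφcont : Continuous fun pr : ℝ × Es d => φ pr.1 pr.2)
    (hφ0 : ∀ x, φ 0 x = x)
    (hφadd : ∀ s t x, φ (s + t) x = φ s (φ t x))
    (ξ : Fin P → Es d) (hξinj : Function.Injective ξ)
    (hfix : ∀ t p, φ t (ξ p) = ξ p)
    (γ : Fin Q → Set (Es d)) (hγne : ∀ j, (γ j).Nonempty)
    (hγinv : ∀ j t x, x ∈ γ j → φ t x ∈ γ j)
    (a b : Fin Q → Fin P)
    (hω : ∀ j, ∀ x ∈ γ j, Tendsto (fun t => φ t x) atTop (𝓝 (ξ (b j))))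
    (hα : ∀ j, ∀ x ∈ γ j, Tendsto (fun t => φ t x) atBot (𝓝 (ξ (a j))))
    (ζ : Fin Q → Es d) (hζ : ∀ j, ζ j ∈ γ j)
    (U : Fin P → Set (Es d)) (hUopen : ∀ p, IsOpen (U p)) (hUmem : ∀ p, ξ p ∈ U p)
    (V : Fin Q → Set (Es d)) (hVopen : ∀ j, IsOpen (V j)) (hVmem : ∀ j, ζ j ∈ V j)
    (hUU : ∀ p p', p ≠ p' → Disjoint (closure (U p)) (closure (U p')))
    (hVV : ∀ j j', j ≠ j' → Disjoint (closure (V j)) (closure (V j')))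
    (hUV : ∀ p j, Disjoint (closure (U p)) (closure (V j)))
    (q : ℕ → Fin Q) (hq : ∀ k, b (q k) = a (q (k + 1)))
    (m n : ℕ) (hn : 1 ≤ n) (hper : shiftSeq^[m] q = shiftSeq^[m + n] q) :
    ∀ δ : ℝ, 0 < δ → ∀ k : ℕ, m < k → Dset φ ξ γ U V a b δ q k = ∅ := by
  intro δ _ k hk
  exact Dset_empty_of_shift_eq_general hn hper δ hk
end
end

section
/- (Corollary 4.4.) Suppose there exists δ₀ > 0 such that for every δ with 0 < δ ≤ δ₀ and every pair of sequences q₁, q₂ on the network N that are not shift-related, S_δ(q₁) ∩ S_δ(q₂) = ∅ (the conclusion of Lemma 4.2, uniformly), and suppose every set S_δ(q) is Lebesgue measurable. Then the set of fragmentarily asymptotically stable sequences on N is countable. -/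
open MeasureTheory Filter Topology Metric Set

noncomputable section

/-!
Sequences whose orbits under the shift `Σ` never meet have disjoint stable sets, and an s-finite
measure admits only countably many disjoint sets of positive measure. Hence the sequences whose
stable set has positive measure lie in countably many tail classes, and each class is countable
because `Σ` is countable-to-one. If the basin of `q` has positive measure then so has some
`A_δ(Σ^k q) ⊆ S_δ(Σ^k q)`, so `q` lies in a `Σ^k`-preimage of that countable set.
-/

section Fibers

variable {α β : Type*}

theorem countable_preimage_of_countable_fibers {f : α → β} {s : Set β} (hs : s.Countable)
    (hf : ∀ y ∈ s, (f ⁻¹' {y}).Countable) : (f ⁻¹' s).Countable := by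
  rw [← biUnion_preimage_singleton]
  exact hs.biUnion hf

theorem countable_preimage_iterate {f : α → α} (hf : ∀ y, (f ⁻¹' {y}).Countable)
    {s : Set α} (hs : s.Countable) (n : ℕ) : (f^[n] ⁻¹' s).Countable := by
  induction n with
  | zero => exact hs
  | succ n ih =>
    rw [Function.iterate_succ, preimage_comp]
    exact countable_preimage_of_countable_fibers ih fun y _ => hf y

/-- Tail equivalence for a self-map `f`: two points are equivalent if their forward orbits meet,
possibly after different numbers of steps. For the shift it is the equivalence relation generated
by shift-relatedness, which is not itself transitive. -/
def tailSetoid (f : α → α) : Setoid α where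
  r x y := ∃ m n : ℕ, f^[m] x = f^[n] y
  iseqv :=
    { refl := fun _ => ⟨0, 0, rfl⟩
      symm := fun ⟨m, n, h⟩ => ⟨n, m, h.symm⟩
      trans := by
        rintro x y z ⟨m, n, hxy⟩ ⟨k, l, hyz⟩
        refine ⟨k + m, n + l, ?_⟩
        calc f^[k + m] x = f^[k] (f^[n] y) := by rw [Function.iterate_add_apply, hxy]
          _ = f^[n] (f^[k] y) := Function.Commute.iterate_iterate_self f k n y
          _ = f^[n + l] z := by rw [hyz, Function.iterate_add_apply] }

theorem countable_tailSetoid_class {f : α → α} (hf : ∀ y, (f ⁻¹' {y}).Countable)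
    (c : Quotient (tailSetoid f)) : (Quotient.mk (tailSetoid f) ⁻¹' {c}).Countable := by
  obtain ⟨y, rfl⟩ := Quotient.exists_rep c
  have hclass : Quotient.mk (tailSetoid f) ⁻¹' {Quotient.mk _ y} ⊆
      ⋃ (m : ℕ) (n : ℕ), f^[m] ⁻¹' {f^[n] y} := fun x hx => by
    obtain ⟨m, n, h⟩ := Quotient.exact hx
    exact mem_iUnion₂.2 ⟨m, n, h⟩
  exact (countable_iUnion fun m => countable_iUnion fun n =>
    countable_preimage_iterate hf (countable_singleton _) m).mono hclass

theorem countable_of_measure_pos_of_aedisjoint_of_countable_fibers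
    {X : Type*} [MeasurableSpace X] {μ : Measure X} [SFinite μ]
    {π : α → β} (hπ : ∀ y, (π ⁻¹' {y}).Countable) {S : α → Set X} {T : Set α}
    (hmeas : ∀ x ∈ T, NullMeasurableSet (S x) μ) (hpos : ∀ x ∈ T, 0 < μ (S x))
    (hdisj : ∀ x ∈ T, ∀ y ∈ T, π x ≠ π y → AEDisjoint μ (S x) (S y)) :
    T.Countable := by
  obtain ⟨R, hRT, hR⟩ := T.exists_subset_bijOn π
  have hRdisj : Pairwise (Function.onFun (AEDisjoint μ) fun x : R => S x) := fun x y hxy =>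
    hdisj x (hRT x.2) y (hRT y.2) fun h => hxy (Subtype.ext (hR.injOn x.2 y.2 h))
  have hRcount : R.Countable := by
    rw [← countable_coe_iff, ← countable_univ_iff]
    exact (Measure.countable_meas_pos_of_disjoint_iUnion₀ (fun x : R => hmeas x (hRT x.2))
      hRdisj).mono fun x _ => hpos x (hRT x.2)
  have himage : (π '' T).Countable := hR.image_eq ▸ hRcount.image π
  exact (countable_preimage_of_countable_fibers himage fun y _ => hπ y).mono
    (subset_preimage_image π T)

end Fibers

section Shift

variable {A B : Type*}

theorem countable_shiftSeq_fiber [Countable A] (q : ℕ → A) : (shiftSeq ⁻¹' {q}).Countable := by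
  have hinj : InjOn (fun r : ℕ → A => r 0) (shiftSeq ⁻¹' {q}) := by
    intro r hr r' hr' hzero
    funext k
    cases k with
    | zero => exact hzero
    | succ k => exact congrFun (hr.trans hr'.symm) k
  exact (mapsTo_univ _ _).countable_of_injOn hinj countable_univ

/-- Two sequences are shift-related if one of them is an iterated shift of the other. -/
def ShiftRelated (q₁ q₂ : ℕ → A) : Prop :=
  ∃ k : ℕ, shiftSeq^[k] q₁ = q₂ ∨ shiftSeq^[k] q₂ = q₁

theorem ShiftRelated.exists_iterate_eq_iterate {q₁ q₂ : ℕ → A} :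
    ShiftRelated q₁ q₂ → ∃ m n : ℕ, shiftSeq^[m] q₁ = shiftSeq^[n] q₂
  | ⟨k, .inl h⟩ => ⟨k, 0, h⟩
  | ⟨k, .inr h⟩ => ⟨0, k, h.symm⟩

/-- The sequences on a network, seen as infinite edge paths: `a` and `b` give the initial and
terminal vertex of an edge, and each edge of `q` ends where the next one begins. -/
def IsNetworkSeq (a b : A → B) (q : ℕ → A) : Prop :=
  ∀ k, b (q k) = a (q (k + 1))

theorem IsNetworkSeq.shiftSeq_iterate {a b : A → B} {q : ℕ → A} (hq : IsNetworkSeq a b q)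
    (n : ℕ) : IsNetworkSeq a b (shiftSeq^[n] q) :=
  Function.Iterate.rec (IsNetworkSeq a b) hq (fun _ h k => h (k + 1)) n

end Shift

section Basins

variable {d P Q : ℕ} {φ : ℝ → Es d → Es d} {ξ : Fin P → Es d} {γ : Fin Q → Set (Es d)}
  {U : Fin P → Set (Es d)} {V : Fin Q → Set (Es d)} {a b : Fin Q → Fin P} {δ : ℝ}
  {μ : Measure (Es d)}

theorem exists_measure_stableSet_pos_of_measure_basin_pos {q : ℕ → Fin Q}
    (hq : 0 < μ (basin φ ξ γ U V a b δ q)) :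
    ∃ n : ℕ, 0 < μ (stableSet φ ξ γ U V a b δ (shiftSeq^[n] q)) := by
  obtain ⟨n, hn⟩ := exists_measure_pos_of_not_measure_iUnion_null hq.ne'
  exact ⟨n, hn.trans_le (measure_mono (sep_subset _ _))⟩

theorem countable_isNetworkSeq_measure_stableSet_pos [SFinite μ]
    (hmeas : ∀ q, IsNetworkSeq a b q → NullMeasurableSet (stableSet φ ξ γ U V a b δ q) μ)
    (hdisj : ∀ q₁ q₂, IsNetworkSeq a b q₁ → IsNetworkSeq a b q₂ → ¬ ShiftRelated q₁ q₂ →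
      AEDisjoint μ (stableSet φ ξ γ U V a b δ q₁) (stableSet φ ξ γ U V a b δ q₂)) :
    {q | IsNetworkSeq a b q ∧ 0 < μ (stableSet φ ξ γ U V a b δ q)}.Countable :=
  countable_of_measure_pos_of_aedisjoint_of_countable_fibers
    (countable_tailSetoid_class countable_shiftSeq_fiber)
    (fun q hq => hmeas q hq.1) (fun _ hq => hq.2)
    fun q₁ h₁ q₂ h₂ hne => hdisj q₁ q₂ h₁.1 h₂.1 fun hrel =>
      hne (Quotient.sound hrel.exists_iterate_eq_iterate)

theorem countable_fas_sequences_general [SFinite μ]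
    (hmeas : ∀ q, IsNetworkSeq a b q → NullMeasurableSet (stableSet φ ξ γ U V a b δ q) μ)
    (hdisj : ∀ q₁ q₂, IsNetworkSeq a b q₁ → IsNetworkSeq a b q₂ → ¬ ShiftRelated q₁ q₂ →
      AEDisjoint μ (stableSet φ ξ γ U V a b δ q₁) (stableSet φ ξ γ U V a b δ q₂)) :
    {q | IsNetworkSeq a b q ∧ 0 < μ (basin φ ξ γ U V a b δ q)}.Countable := by
  have hstable := countable_isNetworkSeq_measure_stableSet_pos hmeas hdisj
  refine (countable_iUnion fun n : ℕ =>
    countable_preimage_iterate countable_shiftSeq_fiber hstable n).mono ?_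
  rintro q ⟨hq, hpos⟩
  obtain ⟨n, hn⟩ := exists_measure_stableSet_pos_of_measure_basin_pos hpos
  exact mem_iUnion.2 ⟨n, hq.shiftSeq_iterate n, hn⟩

end Basins

/-- Corollary 4.4: under the (uniform) conclusion of Lemma 4.2 and measurability of the `δ`-stable sets, there are at most countably many f.a.s. sequences on the network. -/
theorem countable_fas_sequences
    {d P Q : ℕ} (hd : 1 ≤ d) (hP : 1 ≤ P) (hQ : 1 ≤ Q)
    (φ : ℝ → Es d → Es d)
    (hφcont : Continuous fun pr : ℝ × Es d => φ pr.1 pr.2)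
    (hφ0 : ∀ x, φ 0 x = x)
    (hφadd : ∀ s t x, φ (s + t) x = φ s (φ t x))
    (ξ : Fin P → Es d) (hξinj : Function.Injective ξ)
    (hfix : ∀ t p, φ t (ξ p) = ξ p)
    (γ : Fin Q → Set (Es d)) (hγne : ∀ j, (γ j).Nonempty)
    (hγinv : ∀ j t x, x ∈ γ j → φ t x ∈ γ j)
    (a b : Fin Q → Fin P)
    (hω : ∀ j, ∀ x ∈ γ j, Tendsto (fun t => φ t x) atTop (𝓝 (ξ (b j))))
    (hα : ∀ j, ∀ x ∈ γ j, Tendsto (fun t => φ t x) atBot (𝓝 (ξ (a j))))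
    (ζ : Fin Q → Es d) (hζ : ∀ j, ζ j ∈ γ j)
    (U : Fin P → Set (Es d)) (hUopen : ∀ p, IsOpen (U p)) (hUmem : ∀ p, ξ p ∈ U p)
    (V : Fin Q → Set (Es d)) (hVopen : ∀ j, IsOpen (V j)) (hVmem : ∀ j, ζ j ∈ V j)
    (hUU : ∀ p p', p ≠ p' → Disjoint (closure (U p)) (closure (U p')))
    (hVV : ∀ j j', j ≠ j' → Disjoint (closure (V j)) (closure (V j')))
    (hUV : ∀ p j, Disjoint (closure (U p)) (closure (V j)))
    (δ₀ : ℝ) (hδ₀ : 0 < δ₀)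
    (hdisjS : ∀ δ : ℝ, 0 < δ → δ ≤ δ₀ → ∀ q₁ q₂ : ℕ → Fin Q,
      (∀ k, b (q₁ k) = a (q₁ (k + 1))) → (∀ k, b (q₂ k) = a (q₂ (k + 1))) →
      (¬ ∃ k : ℕ, shiftSeq^[k] q₁ = q₂ ∨ shiftSeq^[k] q₂ = q₁) →
      stableSet φ ξ γ U V a b δ q₁ ∩ stableSet φ ξ γ U V a b δ q₂ = ∅)
    (hmeasS : ∀ δ : ℝ, 0 < δ → ∀ q : ℕ → Fin Q,
      MeasurableSet (stableSet φ ξ γ U V a b δ q)) :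
    {q : ℕ → Fin Q | (∀ k, b (q k) = a (q (k + 1))) ∧ FAS φ ξ γ U V a b q}.Countable := by
  have hbasin : {q | IsNetworkSeq a b q ∧ 0 < volume (basin φ ξ γ U V a b δ₀ q)}.Countable :=
    countable_fas_sequences_general (fun q _ => (hmeasS δ₀ hδ₀ q).nullMeasurableSet)
      fun q₁ q₂ h₁ h₂ hrel =>
        (disjoint_iff_inter_eq_empty.2 (hdisjS δ₀ hδ₀ le_rfl q₁ q₂ h₁ h₂ hrel)).aedisjoint
  refine hbasin.mono ?_
  rintro q ⟨hq, hfas⟩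
  exact ⟨hq, hfas δ₀ hδ₀⟩
end
end
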